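/- arXiv:1702.00547 — 2 statements merged into one kernel-verified Lean document; each statement's English description precedes it below -/
import Mathlib

section
/- Let A1 ∈ ℍ^{m1×p}, A2 ∈ ℍ^{m2×p}, B1 ∈ ℍ^{q1×n}, B2 ∈ ℍ^{q2×n}, C1 ∈ ℍ^{m1×n}, C2 ∈ ℍ^{m2×n} be quaternion matrices. Define A11 = R_{(A2 L_{A1})} A2, B11 = B1 L_{B2}, and C11 = R_{(A2 L_{A1})} (C2 − A2 A1⁺ C1) L_{B2}. Then there exist quaternion matrices X1 ∈ ℍ^{p×n}, X2 ∈ ℍ^{m1×q1}, X3 ∈ ℍ^{m2×q2} satisfying A1 X1 − X2 B1 = C1 and A2 X1 − X3 B2 = C2 if and only if R_{A1} C1 L_{B1} = 0, R_{A11} C11 = 0, and C11 L_{B11} = 0. -/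
open Matrix

noncomputable section

/-- `Mat a b` is the type of `a × b` matrices over the real quaternions. -/
abbrev Mat (a b : ℕ) := Matrix (Fin a) (Fin b) (Quaternion ℝ)

/-- `Ad` is a Moore–Penrose inverse of `A`: the four Penrose equations hold. -/
def IsMPInv {k l : Type*} [Fintype k] [Fintype l]
    (A : Matrix k l (Quaternion ℝ)) (Ad : Matrix l k (Quaternion ℝ)) : Prop :=
  A * Ad * A = A ∧ Ad * A * Ad = Ad ∧ (A * Ad)ᴴ = A * Ad ∧ (Ad * A)ᴴ = Ad * A

/-- The projector `L_A = I - A⁺ A`. -/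
def Lp {k l : Type*} [Fintype k] [Fintype l] [DecidableEq l]
    (A : Matrix k l (Quaternion ℝ)) (Ad : Matrix l k (Quaternion ℝ)) :
    Matrix l l (Quaternion ℝ) :=
  1 - Ad * A

/-- The projector `R_A = I - A A⁺`. -/
def Rp {k l : Type*} [Fintype k] [Fintype l] [DecidableEq k]
    (A : Matrix k l (Quaternion ℝ)) (Ad : Matrix l k (Quaternion ℝ)) :
    Matrix k k (Quaternion ℝ) :=
  1 - A * Ad

/-!
Let `G₁` be an inner inverse of `A₁`. The equation `A₁ X₁ = C₁ + X₂ B₁` determines `X₁` up to an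
arbitrary summand `(1 - G₁ A₁) V`. Substituting this into the second equation leaves an equation of
the form `A V - X₃ B = E`, so `V` and `X₃` can be eliminated by the solvability criterion of
Baksalary and Kala; what remains of the second equation is `A₁₁ (G₁ X₂) B₁₁ = C₁₁`. Replacing `X₂`
by `X₂ + A₁ T`, together with `X₁` by `X₁ + T B₁`, preserves the first equation and changes
`A₁₁ (G₁ X₂)` by `A₁₁ T`, because `A₁₁ G₁ A₁ = A₁₁`. Hence the two conditions on `X₂` decouple, and
the system is solvable if and only if `A₁ X - W B₁ = C₁` and `A₁₁ Y B₁₁ = C₁₁` are solvable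
separately.
-/

section InnerInverse

variable {R k l r m m₁ m₂ n p q q₁ q₂ : Type*} [Ring R] [Fintype m] [Fintype m₁] [Fintype m₂]
  [Fintype n] [Fintype p] [Fintype q] [Fintype q₁] [Fintype q₂]

/-- `G` is an inner inverse (or `{1}`-inverse) of `A`: the first of the four Penrose equations.
It makes `1 - A * G` and `1 - G * A` idempotents annihilating `A`, with which the solvability of
linear matrix equations is tested. -/
def IsInnerInverse (A : Matrix m p R) (G : Matrix p m R) : Prop :=
  A * G * A = A

theorem IsMPInv.isInnerInverse {A : Matrix m p (Quaternion ℝ)} {Ad : Matrix p m (Quaternion ℝ)}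
    (h : IsMPInv A Ad) : IsInnerInverse A Ad :=
  h.1

namespace IsInnerInverse

theorem one_sub_mul_self [DecidableEq m] {A : Matrix m p R} {G : Matrix p m R}
    (hG : IsInnerInverse A G) : (1 - A * G) * A = 0 := by
  rw [Matrix.sub_mul, Matrix.one_mul, hG, sub_self]

theorem self_mul_one_sub [DecidableEq p] {A : Matrix m p R} {G : Matrix p m R}
    (hG : IsInnerInverse A G) : A * (1 - G * A) = 0 := by
  rw [Matrix.mul_sub, Matrix.mul_one, ← Matrix.mul_assoc, hG, sub_self]

theorem exists_mul_eq_iff [DecidableEq m] {A : Matrix m p R} {G : Matrix p m R}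
    (hG : IsInnerInverse A G) (C : Matrix m k R) :
    (∃ X : Matrix p k R, A * X = C) ↔ (1 - A * G) * C = 0 := by
  constructor
  · rintro ⟨X, rfl⟩
    rw [← Matrix.mul_assoc, hG.one_sub_mul_self, Matrix.zero_mul]
  · intro hC
    rw [Matrix.sub_mul, Matrix.one_mul, sub_eq_zero] at hC
    exact ⟨G * C, by rw [← Matrix.mul_assoc, ← hC]⟩

theorem exists_mul_eq_iff' [DecidableEq n] {B : Matrix q n R} {H : Matrix n q R}
    (hH : IsInnerInverse B H) (C : Matrix k n R) :
    (∃ Y : Matrix k q R, Y * B = C) ↔ C * (1 - H * B) = 0 := by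
  constructor
  · rintro ⟨Y, rfl⟩
    rw [Matrix.mul_assoc, hH.self_mul_one_sub, Matrix.mul_zero]
  · intro hC
    rw [Matrix.mul_sub, Matrix.mul_one, sub_eq_zero] at hC
    exact ⟨C * H, by rw [Matrix.mul_assoc, ← hC]⟩

/-- Penrose's criterion for `A X B = C`. -/
theorem exists_mul_mul_eq_iff [DecidableEq m] [DecidableEq n]
    {A : Matrix m p R} {G : Matrix p m R} (hG : IsInnerInverse A G)
    {B : Matrix q n R} {H : Matrix n q R} (hH : IsInnerInverse B H) (C : Matrix m n R) :
    (∃ X : Matrix p q R, A * X * B = C) ↔ (1 - A * G) * C = 0 ∧ C * (1 - H * B) = 0 := by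
  rw [← hG.exists_mul_eq_iff, ← hH.exists_mul_eq_iff']
  constructor
  · rintro ⟨X, hX⟩
    exact ⟨⟨X * B, by rw [← Matrix.mul_assoc, hX]⟩, ⟨A * X, hX⟩⟩
  · rintro ⟨⟨Z, hZ⟩, ⟨Y, hY⟩⟩
    refine ⟨Z * H, ?_⟩
    calc A * (Z * H) * B = Y * (B * H * B) := by
          rw [← Matrix.mul_assoc, hZ, ← hY]; simp only [Matrix.mul_assoc]
      _ = C := by rw [hH, hY]

/-- The criterion of Baksalary and Kala for `A X - Y B = C`. -/
theorem exists_mul_sub_mul_eq_iff [DecidableEq m] [DecidableEq n]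
    {A : Matrix m p R} {G : Matrix p m R} (hG : IsInnerInverse A G)
    {B : Matrix q n R} {H : Matrix n q R} (hH : IsInnerInverse B H) (C : Matrix m n R) :
    (∃ (X : Matrix p n R) (Y : Matrix m q R), A * X - Y * B = C) ↔
      (1 - A * G) * C * (1 - H * B) = 0 := by
  rw [← hH.exists_mul_eq_iff']
  constructor
  · rintro ⟨X, Y, rfl⟩
    refine ⟨-((1 - A * G) * Y), ?_⟩
    rw [Matrix.mul_sub, ← Matrix.mul_assoc, hG.one_sub_mul_self, Matrix.zero_mul, zero_sub,
      Matrix.neg_mul, Matrix.mul_assoc]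
  · rintro ⟨Z, hZ⟩
    refine ⟨G * C, -Z, ?_⟩
    rw [Matrix.neg_mul, hZ, Matrix.sub_mul, Matrix.one_mul, Matrix.mul_assoc]
    abel

theorem mul_eq_iff_exists_eq_add [DecidableEq p] {A : Matrix m p R} {G : Matrix p m R}
    (hG : IsInnerInverse A G) {D : Matrix m k R} (hD : ∃ X : Matrix p k R, A * X = D)
    (X : Matrix p k R) :
    A * X = D ↔ ∃ V : Matrix p k R, X = G * D + (1 - G * A) * V := by
  constructor
  · rintro rfl
    refine ⟨X, ?_⟩
    rw [Matrix.sub_mul, Matrix.one_mul, Matrix.mul_assoc]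
    abel
  · rintro ⟨V, rfl⟩
    obtain ⟨X₀, rfl⟩ := hD
    rw [Matrix.mul_add, ← Matrix.mul_assoc, ← Matrix.mul_assoc, hG, ← Matrix.mul_assoc,
      hG.self_mul_one_sub, Matrix.zero_mul, add_zero]

theorem exists_mul_eq_and_mul_sub_mul_eq_iff [DecidableEq m₂] [DecidableEq n] [DecidableEq p]
    {A₁ : Matrix m₁ p R} {G₁ : Matrix p m₁ R} (hG₁ : IsInnerInverse A₁ G₁)
    {A₂ : Matrix m₂ p R} {G : Matrix p m₂ R} (hG : IsInnerInverse (A₂ * (1 - G₁ * A₁)) G)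
    {B : Matrix q n R} {H : Matrix n q R} (hH : IsInnerInverse B H)
    (D : Matrix m₁ n R) (E : Matrix m₂ n R) :
    (∃ (X : Matrix p n R) (Y : Matrix m₂ q R), A₁ * X = D ∧ A₂ * X - Y * B = E) ↔
      (∃ X : Matrix p n R, A₁ * X = D) ∧
        (1 - A₂ * (1 - G₁ * A₁) * G) * (E - A₂ * G₁ * D) * (1 - H * B) = 0 := by
  rw [← hG.exists_mul_sub_mul_eq_iff hH]
  have substitute (V : Matrix p n R) (Y : Matrix m₂ q R) :
      A₂ * (G₁ * D + (1 - G₁ * A₁) * V) - Y * B = E ↔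
        A₂ * (1 - G₁ * A₁) * V - Y * B = E - A₂ * G₁ * D := by
    rw [Matrix.mul_add, ← Matrix.mul_assoc, ← Matrix.mul_assoc, add_sub_assoc, eq_sub_iff_add_eq']
  constructor
  · rintro ⟨X, Y, hX, hXY⟩
    obtain ⟨V, rfl⟩ := (hG₁.mul_eq_iff_exists_eq_add ⟨X, hX⟩ X).1 hX
    exact ⟨⟨_, hX⟩, V, Y, (substitute V Y).1 hXY⟩
  · rintro ⟨hD, V, Y, hVY⟩
    exact ⟨_, Y, (hG₁.mul_eq_iff_exists_eq_add hD _).2 ⟨V, rfl⟩, (substitute V Y).2 hVY⟩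

end IsInnerInverse

theorem exists_mul_sub_mul_eq_and_mul_mul_eq_iff {A : Matrix m p R} {G : Matrix p m R}
    {M : Matrix k p R} (hM : M * G * A = M) (B : Matrix q r R) (C : Matrix m r R)
    (N : Matrix q l R) (D : Matrix k l R) :
    (∃ Y : Matrix m q R, (∃ X : Matrix p r R, A * X - Y * B = C) ∧ M * (G * Y) * N = D) ↔
      (∃ (X : Matrix p r R) (Y : Matrix m q R), A * X - Y * B = C) ∧
        ∃ Z : Matrix p q R, M * Z * N = D := by
  constructor
  · rintro ⟨Y, ⟨X, hX⟩, hY⟩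
    exact ⟨⟨X, Y, hX⟩, G * Y, hY⟩
  · rintro ⟨⟨X, Y, hX⟩, Z, hZ⟩
    set T := Z - G * Y with hT
    refine ⟨Y + A * T, ⟨X + T * B, ?_⟩, ?_⟩
    · rw [← hX, Matrix.mul_add, Matrix.add_mul, Matrix.mul_assoc]
      abel
    · have shift : M * (G * (Y + A * T)) = M * Z := by
        rw [Matrix.mul_add, Matrix.mul_add, ← Matrix.mul_assoc G, ← Matrix.mul_assoc M (G * A),
          ← Matrix.mul_assoc M G A, hM, hT, Matrix.mul_sub]
        abel
      rw [shift, hZ]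

theorem stmt_4_general [DecidableEq m₁] [DecidableEq m₂] [DecidableEq n] [DecidableEq p]
    {A₁ : Matrix m₁ p R} {G₁ : Matrix p m₁ R} (hG₁ : IsInnerInverse A₁ G₁)
    {A₂ A₂L A₁₁ : Matrix m₂ p R} (hA₂L : A₂L = A₂ * (1 - G₁ * A₁))
    {G : Matrix p m₂ R} (hG : IsInnerInverse A₂L G) (hA₁₁ : A₁₁ = (1 - A₂L * G) * A₂)
    {G₁₁ : Matrix p m₂ R} (hG₁₁ : IsInnerInverse A₁₁ G₁₁)
    {B₁ B₁₁ : Matrix q₁ n R} {H₁ : Matrix n q₁ R} (hH₁ : IsInnerInverse B₁ H₁)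
    {B₂ : Matrix q₂ n R} {H₂ : Matrix n q₂ R} (hH₂ : IsInnerInverse B₂ H₂)
    (hB₁₁ : B₁₁ = B₁ * (1 - H₂ * B₂)) {H₁₁ : Matrix n q₁ R} (hH₁₁ : IsInnerInverse B₁₁ H₁₁)
    (C₁ : Matrix m₁ n R) {C₂ C₁₁ : Matrix m₂ n R}
    (hC₁₁ : C₁₁ = (1 - A₂L * G) * (C₂ - A₂ * G₁ * C₁) * (1 - H₂ * B₂)) :
    (∃ (X₁ : Matrix p n R) (X₂ : Matrix m₁ q₁ R) (X₃ : Matrix m₂ q₂ R),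
        A₁ * X₁ - X₂ * B₁ = C₁ ∧ A₂ * X₁ - X₃ * B₂ = C₂) ↔
      (1 - A₁ * G₁) * C₁ * (1 - H₁ * B₁) = 0 ∧ (1 - A₁₁ * G₁₁) * C₁₁ = 0 ∧
        C₁₁ * (1 - H₁₁ * B₁₁) = 0 := by
  have absorb : A₁₁ * G₁ * A₁ = A₁₁ := by
    have : A₁₁ * (1 - G₁ * A₁) = 0 := by
      rw [hA₁₁, Matrix.mul_assoc, ← hA₂L, hG.one_sub_mul_self]
    rwa [Matrix.mul_sub, Matrix.mul_one, ← Matrix.mul_assoc, sub_eq_zero, eq_comm] at this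
  have residual (X₂ : Matrix m₁ q₁ R) :
      (1 - A₂L * G) * (C₂ - A₂ * G₁ * (C₁ + X₂ * B₁)) * (1 - H₂ * B₂) =
        C₁₁ - A₁₁ * (G₁ * X₂) * B₁₁ := by
    rw [hC₁₁, hA₁₁, hB₁₁, Matrix.mul_add, ← sub_sub, Matrix.mul_sub _ _ (_ * (X₂ * B₁)),
      Matrix.sub_mul]
    simp only [Matrix.mul_assoc]
  have eliminate (X₂ : Matrix m₁ q₁ R) :
      (∃ (X₁ : Matrix p n R) (X₃ : Matrix m₂ q₂ R),
        A₁ * X₁ - X₂ * B₁ = C₁ ∧ A₂ * X₁ - X₃ * B₂ = C₂) ↔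
        (∃ X₁ : Matrix p n R, A₁ * X₁ - X₂ * B₁ = C₁) ∧ A₁₁ * (G₁ * X₂) * B₁₁ = C₁₁ := by
    rw [hA₂L] at hG
    simp only [sub_eq_iff_eq_add (c := C₁)]
    rw [hG₁.exists_mul_eq_and_mul_sub_mul_eq_iff hG hH₂, ← hA₂L, residual, sub_eq_zero,
      eq_comm (a := C₁₁)]
  rw [exists_comm]
  simp only [eliminate]
  rw [exists_mul_sub_mul_eq_and_mul_mul_eq_iff absorb, hG₁.exists_mul_sub_mul_eq_iff hH₁,
    hG₁₁.exists_mul_mul_eq_iff hH₁₁]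

end InnerInverse

theorem stmt_4 {m1 m2 p q1 q2 n : ℕ}
    (A1 : Mat m1 p) (A1d : Mat p m1) (hA1 : IsMPInv A1 A1d)
    (A2 : Mat m2 p)
    (B1 : Mat q1 n) (B1d : Mat n q1) (hB1 : IsMPInv B1 B1d)
    (B2 : Mat q2 n) (B2d : Mat n q2) (hB2 : IsMPInv B2 B2d)
    (C1 : Mat m1 n) (C2 : Mat m2 n)
    (A2L : Mat m2 p) (hA2L : A2L = A2 * Lp A1 A1d)
    (A2Ld : Mat p m2) (hA2Ld : IsMPInv A2L A2Ld)
    (A11 : Mat m2 p) (hA11 : A11 = Rp A2L A2Ld * A2)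
    (A11d : Mat p m2) (hA11d : IsMPInv A11 A11d)
    (B11 : Mat q1 n) (hB11 : B11 = B1 * Lp B2 B2d)
    (B11d : Mat n q1) (hB11d : IsMPInv B11 B11d)
    (C11 : Mat m2 n)
    (hC11 : C11 = Rp A2L A2Ld * (C2 - A2 * A1d * C1) * Lp B2 B2d) :
    (∃ (X1 : Mat p n) (X2 : Mat m1 q1) (X3 : Mat m2 q2),
        A1 * X1 - X2 * B1 = C1 ∧ A2 * X1 - X3 * B2 = C2) ↔
      (Rp A1 A1d * C1 * Lp B1 B1d = 0 ∧ Rp A11 A11d * C11 = 0 ∧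
        C11 * Lp B11 B11d = 0) := by
  exact stmt_4_general hA1.isInnerInverse hA2L hA2Ld.isInnerInverse hA11 hA11d.isInnerInverse
    hB1.isInnerInverse hB2.isInnerInverse hB11 hB11d.isInnerInverse C1 hC11
end
end

section
/- Let A1 ∈ ℍ^{m×p1}, B1 ∈ ℍ^{q×n1}, C1 ∈ ℍ^{m×n1}, A2 ∈ ℍ^{m×p2}, B2 ∈ ℍ^{q×n2}, C2 ∈ ℍ^{m×n2}, A3 ∈ ℍ^{m3×p2}, B3 ∈ ℍ^{q4×n2}, C3 ∈ ℍ^{m3×n2} be quaternion matrices. Define A4 = A2 L_{A3}, B4 = R_{B1} B2, A = R_{A4} A2, B = B3 L_{B4}, C = R_{A4} A1, D = B2 L_{B4}, C4 = C2 − A2 A3⁺ C3 − R_{A1} C1 B1⁺ B2, E = R_{A4} C4 L_{B4}, M = R_A C, N = D L_B. Then there exist quaternion matrices X ∈ ℍ^{p1×n1}, Y ∈ ℍ^{m×q}, Z ∈ ℍ^{p2×n2}, W ∈ ℍ^{m3×q4} satisfying A1 X − Y B1 = C1, A2 Z − Y B2 = C2 and A3 Z − W B3 = C3 if and only if R_{A1}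 C1 L_{B1} = 0, R_{A2} C2 L_{B2} = 0, R_{A3} C3 L_{B3} = 0, R_M R_A E = 0, E L_B L_N = 0, R_A E L_D = 0, and R_C E L_B = 0. -/
open Matrix

noncomputable section

/-!
Over any ring, an inner inverse `G` of `A` turns solvability of `A X = C` into `(1 - A G) C = 0`,
and dually on the right. By this criterion the first and third equations describe the admissible `Y`
and `Z` through free parameters; substituting them into the second equation, with the sign of `Y`
changed, leaves `A₄ S + V B₄ + A₂ T B₃ + A₁ U B₂ = C₄`. The unknowns `S` and `V` are removed by
multiplying with `1 - A₄ A₄⁺` and `1 - B₄⁺ B₄`, and `T` is then removed from `A T B + C U D = E` in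
the same way. What remains are two equations for `U` which agree wherever they overlap, so that
separate solvability suffices.
-/

section InnerInverse

variable {R : Type*} [Ring R] {m n p q : Type*}

/-- `G` is an inner inverse, or `{1}`-inverse, of `A`: the first Penrose equation holds. Solvability
of linear matrix equations is expressed through it, and it need not be unique. -/
def IsInnerInv [Fintype m] [Fintype n] (A : Matrix m n R) (G : Matrix n m R) : Prop :=
  A * G * A = A

/-- The matrix `L_A = 1 - G A`, a projector onto the kernel of `A` when `G` is an inner inverse
of `A`. -/
def kerProj [Fintype m] [DecidableEq n] (A : Matrix m n R) (G : Matrix n m R) : Matrix n n R :=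
  1 - G * A

/-- The matrix `R_A = 1 - A G`, a projector whose kernel is the range of `A` when `G` is an inner
inverse of `A`. -/
def cokerProj [Fintype n] [DecidableEq m] (A : Matrix m n R) (G : Matrix n m R) : Matrix m m R :=
  1 - A * G

theorem mul_kerProj_eq_zero_iff [Fintype m] [Fintype n] [DecidableEq n] {A : Matrix m n R}
    {G : Matrix n m R} {C : Matrix p n R} : C * kerProj A G = 0 ↔ C * G * A = C := by
  rw [kerProj, Matrix.mul_sub, Matrix.mul_one, sub_eq_zero, eq_comm, Matrix.mul_assoc]

theorem cokerProj_mul_eq_zero_iff [Fintype m] [Fintype n] [DecidableEq m] {A : Matrix m n R}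
    {G : Matrix n m R} {C : Matrix m p R} : cokerProj A G * C = 0 ↔ A * (G * C) = C := by
  rw [cokerProj, Matrix.sub_mul, Matrix.one_mul, sub_eq_zero, eq_comm, Matrix.mul_assoc]

theorem mul_mul_add_cokerProj_mul [Fintype m] [Fintype n] [DecidableEq m] (A : Matrix m n R)
    (G : Matrix n m R) (C : Matrix m p R) : A * (G * C) + cokerProj A G * C = C := by
  rw [cokerProj, Matrix.sub_mul, Matrix.one_mul, Matrix.mul_assoc, add_sub_cancel]

theorem mul_mul_add_kerProj_mul [Fintype m] [Fintype n] [DecidableEq n] (A : Matrix m n R)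
    (G : Matrix n m R) (C : Matrix n p R) : G * (A * C) + kerProj A G * C = C := by
  rw [kerProj, Matrix.sub_mul, Matrix.one_mul, Matrix.mul_assoc, add_sub_cancel]

theorem mul_mul_add_mul_cokerProj [Fintype m] [Fintype n] [DecidableEq m] (A : Matrix m n R)
    (G : Matrix n m R) (C : Matrix p m R) : C * A * G + C * cokerProj A G = C := by
  rw [cokerProj, Matrix.mul_sub, Matrix.mul_one, Matrix.mul_assoc, add_sub_cancel]

namespace IsInnerInv

variable [Fintype m] [Fintype n] {A : Matrix m n R} {G : Matrix n m R}

theorem mul_kerProj [DecidableEq n] (hA : IsInnerInv A G) : A * kerProj A G = 0 :=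
  mul_kerProj_eq_zero_iff.2 hA

theorem cokerProj_mul [DecidableEq m] (hA : IsInnerInv A G) : cokerProj A G * A = 0 :=
  cokerProj_mul_eq_zero_iff.2 ((Matrix.mul_assoc A G A).symm.trans hA)

theorem exists_mul_eq_iff [DecidableEq m] (hA : IsInnerInv A G) {C : Matrix m p R} :
    (∃ X : Matrix n p R, A * X = C) ↔ cokerProj A G * C = 0 := by
  constructor
  · rintro ⟨X, rfl⟩
    rw [← Matrix.mul_assoc, hA.cokerProj_mul, Matrix.zero_mul]
  · exact fun hC ↦ ⟨G * C, cokerProj_mul_eq_zero_iff.1 hC⟩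

variable [Fintype p] [Fintype q] {B : Matrix p q R} {H : Matrix q p R}

theorem exists_mul_mul_eq_iff [DecidableEq m] [DecidableEq q] (hA : IsInnerInv A G)
    (hB : IsInnerInv B H) {C : Matrix m q R} :
    (∃ X : Matrix n p R, A * X * B = C) ↔ cokerProj A G * C = 0 ∧ C * kerProj B H = 0 := by
  constructor
  · rintro ⟨X, rfl⟩
    refine ⟨hA.exists_mul_eq_iff.1 ⟨X * B, (Matrix.mul_assoc A X B).symm⟩, ?_⟩
    rw [Matrix.mul_assoc, hB.mul_kerProj, Matrix.mul_zero]
  · rintro ⟨hAC, hCB⟩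
    refine ⟨G * C * H, ?_⟩
    rw [← Matrix.mul_assoc, cokerProj_mul_eq_zero_iff.1 hAC, mul_kerProj_eq_zero_iff.1 hCB]

theorem exists_mul_add_mul_eq_iff [DecidableEq m] [DecidableEq q] (hA : IsInnerInv A G)
    (hB : IsInnerInv B H) {C : Matrix m q R} :
    (∃ (X : Matrix n q R) (Y : Matrix m p R), A * X + Y * B = C) ↔
      cokerProj A G * C * kerProj B H = 0 := by
  constructor
  · rintro ⟨X, Y, rfl⟩
    rw [Matrix.mul_add, ← Matrix.mul_assoc, hA.cokerProj_mul, Matrix.zero_mul, zero_add,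
      Matrix.mul_assoc, Matrix.mul_assoc, hB.mul_kerProj, Matrix.mul_zero, Matrix.mul_zero]
  · intro hC
    refine ⟨G * C, cokerProj A G * C * H, ?_⟩
    rw [mul_kerProj_eq_zero_iff.1 hC, mul_mul_add_cokerProj_mul]

theorem exists_mul_add_mul_eq_sub_iff [DecidableEq m] [DecidableEq q] (hA : IsInnerInv A G)
    (hB : IsInnerInv B H) {C F : Matrix m q R} :
    (∃ (X : Matrix n q R) (Y : Matrix m p R), A * X + Y * B = C - F) ↔
      cokerProj A G * F * kerProj B H = cokerProj A G * C * kerProj B H := by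
  rw [hA.exists_mul_add_mul_eq_iff hB, Matrix.mul_sub, Matrix.sub_mul, sub_eq_zero, eq_comm]

theorem exists_left_mul_add_mul_eq_iff [DecidableEq m] [DecidableEq p] [DecidableEq q]
    (hA : IsInnerInv A G) (hB : IsInnerInv B H) {C : Matrix m q R}
    (hC : cokerProj A G * C * kerProj B H = 0) {Y : Matrix m p R} :
    (∃ X : Matrix n q R, A * X + Y * B = C) ↔
      ∃ (U : Matrix n p R) (V : Matrix m p R),
        Y = cokerProj A G * C * H + A * U + V * cokerProj B H := by
  constructor
  · rintro ⟨X, rfl⟩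
    have hY : cokerProj A G * (A * X + Y * B) = cokerProj A G * Y * B := by
      rw [Matrix.mul_add, ← Matrix.mul_assoc, hA.cokerProj_mul, Matrix.zero_mul, zero_add,
        Matrix.mul_assoc]
    refine ⟨G * Y, cokerProj A G * Y, ?_⟩
    rw [hY, add_right_comm, mul_mul_add_mul_cokerProj, add_comm, mul_mul_add_cokerProj_mul]
  · rintro ⟨U, V, rfl⟩
    refine ⟨G * C - U * B, ?_⟩
    rw [Matrix.add_mul, Matrix.add_mul, mul_kerProj_eq_zero_iff.1 hC, Matrix.mul_assoc V,
      hB.cokerProj_mul, Matrix.mul_zero, add_zero, Matrix.mul_sub, Matrix.mul_assoc A U B,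
      add_comm (cokerProj A G * C), ← add_assoc, sub_add_cancel, mul_mul_add_cokerProj_mul]

theorem exists_right_mul_add_mul_eq_iff [DecidableEq m] [DecidableEq n] [DecidableEq q]
    (hA : IsInnerInv A G) {C : Matrix m q R}
    (hC : cokerProj A G * C * kerProj B H = 0) {Z : Matrix n q R} :
    (∃ W : Matrix m p R, A * Z + W * B = C) ↔
      ∃ (S : Matrix n q R) (T : Matrix n p R), Z = G * C + T * B + kerProj A G * S := by
  constructor
  · rintro ⟨W, rfl⟩
    refine ⟨Z, -(G * W), ?_⟩
    rw [Matrix.mul_add, Matrix.neg_mul, Matrix.mul_assoc G W B, add_neg_cancel_right,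
      mul_mul_add_kerProj_mul]
  · rintro ⟨S, T, rfl⟩
    refine ⟨cokerProj A G * C * H - A * T, ?_⟩
    rw [Matrix.mul_add, Matrix.mul_add, ← Matrix.mul_assoc A (kerProj A G), hA.mul_kerProj,
      Matrix.zero_mul, add_zero, Matrix.sub_mul, mul_kerProj_eq_zero_iff.1 hC,
      ← Matrix.mul_assoc A T B, add_add_sub_cancel, mul_mul_add_cokerProj_mul]

end IsInnerInv

end InnerInverse

section TwoTerm

variable {R : Type*} [Ring R] {l m n o p q r s : Type*}

/- Subtracting `K * P * C * (U₂ - U₁)` from `U₂` turns `P * C * U₂` into `P * C * U₁` and preserves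
the second equation, because `P * C * (U₂ - U₁) * D * Q = P * E * Q - P * E * Q`. -/
theorem IsInnerInv.exists_mul_mul_eq_and_iff [Fintype m] [Fintype n] [Fintype r] [Fintype s]
    [Fintype l] {P : Matrix l m R} {Q : Matrix n o R} {C : Matrix m r R} {D : Matrix s n R}
    {E : Matrix m n R} {K : Matrix r l R} (hK : IsInnerInv (P * C) K) :
    (∃ U : Matrix r s R, P * C * U * D = P * E ∧ C * U * (D * Q) = E * Q) ↔
      (∃ U : Matrix r s R, P * C * U * D = P * E) ∧
        ∃ U : Matrix r s R, C * U * (D * Q) = E * Q := by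
  refine ⟨fun ⟨U, h₁, h₂⟩ ↦ ⟨⟨U, h₁⟩, U, h₂⟩, fun ⟨⟨U₁, h₁⟩, U₂, h₂⟩ ↦ ?_⟩
  have overlap : P * C * (U₂ - U₁) * (D * Q) = 0 := by
    calc P * C * (U₂ - U₁) * (D * Q)
        = P * (C * U₂ * (D * Q)) - P * C * U₁ * D * Q := by
          simp only [Matrix.mul_sub, Matrix.sub_mul, Matrix.mul_assoc]
      _ = 0 := by rw [h₁, h₂, Matrix.mul_assoc, sub_self]
  refine ⟨U₂ - K * (P * C * (U₂ - U₁)), ?_, ?_⟩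
  · calc P * C * (U₂ - K * (P * C * (U₂ - U₁))) * D
        = (P * C * U₂ - P * C * K * (P * C) * (U₂ - U₁)) * D := by
          simp only [Matrix.mul_sub, Matrix.mul_assoc]
      _ = P * E := by rw [hK, ← Matrix.mul_sub, sub_sub_cancel, h₁]
  · calc C * (U₂ - K * (P * C * (U₂ - U₁))) * (D * Q)
        = C * U₂ * (D * Q) - C * K * (P * C * (U₂ - U₁) * (D * Q)) := by
          simp only [Matrix.mul_sub, Matrix.sub_mul, Matrix.mul_assoc]
      _ = E * Q := by rw [overlap, Matrix.mul_zero, sub_zero, h₂]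

theorem exists_mul_mul_add_mul_mul_eq_iff [Fintype m] [Fintype n] [Fintype p] [Fintype q]
    [Fintype r] [Fintype s] [DecidableEq m] [DecidableEq n]
    {A : Matrix m p R} {A' : Matrix p m R} (hA : IsInnerInv A A')
    {B : Matrix q n R} {B' : Matrix n q R} (hB : IsInnerInv B B')
    {C : Matrix m r R} {C' : Matrix r m R} (hC : IsInnerInv C C')
    {D : Matrix s n R} {D' : Matrix n s R} (hD : IsInnerInv D D')
    {M' : Matrix r m R} (hM : IsInnerInv (cokerProj A A' * C) M')
    {N' : Matrix n s R} (hN : IsInnerInv (D * kerProj B B') N') {E : Matrix m n R} :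
    (∃ (T : Matrix p q R) (U : Matrix r s R), A * T * B + C * U * D = E) ↔
      cokerProj (cokerProj A A' * C) M' * cokerProj A A' * E = 0 ∧
      E * kerProj B B' * kerProj (D * kerProj B B') N' = 0 ∧
      cokerProj A A' * E * kerProj D D' = 0 ∧ cokerProj C C' * E * kerProj B B' = 0 := by
  have eliminate_T (U : Matrix r s R) : (∃ T : Matrix p q R, A * T * B + C * U * D = E) ↔
      cokerProj A A' * C * U * D = cokerProj A A' * E ∧
        C * U * (D * kerProj B B') = E * kerProj B B' := by
    simp only [← eq_sub_iff_add_eq, hA.exists_mul_mul_eq_iff hB]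
    simp only [Matrix.mul_sub, Matrix.sub_mul, sub_eq_zero, Matrix.mul_assoc, eq_comm]
  rw [exists_comm]
  simp only [eliminate_T]
  rw [hM.exists_mul_mul_eq_and_iff, hM.exists_mul_mul_eq_iff hD, hC.exists_mul_mul_eq_iff hN]
  simp only [← Matrix.mul_assoc]
  tauto

end TwoTerm

section CoupledSystem

variable {R : Type*} [Ring R] {m q p₁ n₁ p₂ n₂ m₃ q₄ : Type*} [Fintype m] [Fintype q] [Fintype p₁]
  [Fintype n₁] [Fintype p₂] [Fintype n₂] [Fintype m₃] [Fintype q₄] [DecidableEq m] [DecidableEq q]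
  [DecidableEq n₁] [DecidableEq p₂] [DecidableEq n₂] [DecidableEq m₃]

theorem exists_coupled_iff_exists_mul_mul_add_mul_mul_eq
    {A₁ : Matrix m p₁ R} {A₁' : Matrix p₁ m R} (hA₁ : IsInnerInv A₁ A₁')
    {B₁ : Matrix q n₁ R} {B₁' : Matrix n₁ q R} (hB₁ : IsInnerInv B₁ B₁') {C₁ : Matrix m n₁ R}
    {A₂ : Matrix m p₂ R} {B₂ : Matrix q n₂ R} {C₂ : Matrix m n₂ R}
    {A₃ : Matrix m₃ p₂ R} {A₃' : Matrix p₂ m₃ R} (hA₃ : IsInnerInv A₃ A₃')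
    {B₃ : Matrix q₄ n₂ R} {B₃' : Matrix n₂ q₄ R} (hB₃ : IsInnerInv B₃ B₃') {C₃ : Matrix m₃ n₂ R}
    {A₄ : Matrix m p₂ R} (hA₄_eq : A₄ = A₂ * kerProj A₃ A₃')
    {A₄' : Matrix p₂ m R} (hA₄ : IsInnerInv A₄ A₄')
    {B₄ : Matrix q n₂ R} (hB₄_eq : B₄ = cokerProj B₁ B₁' * B₂)
    {B₄' : Matrix n₂ q R} (hB₄ : IsInnerInv B₄ B₄') :
    (∃ (X : Matrix p₁ n₁ R) (Y : Matrix m q R) (Z : Matrix p₂ n₂ R) (W : Matrix m₃ q₄ R),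
        A₁ * X - Y * B₁ = C₁ ∧ A₂ * Z - Y * B₂ = C₂ ∧ A₃ * Z - W * B₃ = C₃) ↔
      cokerProj A₁ A₁' * C₁ * kerProj B₁ B₁' = 0 ∧ cokerProj A₃ A₃' * C₃ * kerProj B₃ B₃' = 0 ∧
      ∃ (T : Matrix p₂ q₄ R) (U : Matrix p₁ q R),
        cokerProj A₄ A₄' * A₂ * T * (B₃ * kerProj B₄ B₄') +
          cokerProj A₄ A₄' * A₁ * U * (B₂ * kerProj B₄ B₄') =
        cokerProj A₄ A₄' * (C₂ - A₂ * A₃' * C₃ - cokerProj A₁ A₁' * C₁ * B₁' * B₂) *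
          kerProj B₄ B₄' := by
  have eliminate_SV (T : Matrix p₂ q₄ R) (U : Matrix p₁ q R) :
      (∃ (S : Matrix p₂ n₂ R) (V : Matrix m q R), A₂ * (A₃' * C₃ + T * B₃ + kerProj A₃ A₃' * S) +
        (cokerProj A₁ A₁' * C₁ * B₁' + A₁ * U + V * cokerProj B₁ B₁') * B₂ = C₂) ↔
      cokerProj A₄ A₄' * A₂ * T * (B₃ * kerProj B₄ B₄') +
          cokerProj A₄ A₄' * A₁ * U * (B₂ * kerProj B₄ B₄') =
        cokerProj A₄ A₄' * (C₂ - A₂ * A₃' * C₃ - cokerProj A₁ A₁' * C₁ * B₁' * B₂) *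
          kerProj B₄ B₄' := by
    have substitute (S : Matrix p₂ n₂ R) (V : Matrix m q R) :
        A₂ * (A₃' * C₃ + T * B₃ + kerProj A₃ A₃' * S) +
          (cokerProj A₁ A₁' * C₁ * B₁' + A₁ * U + V * cokerProj B₁ B₁') * B₂ = C₂ ↔
        A₄ * S + V * B₄ = (C₂ - A₂ * A₃' * C₃ - cokerProj A₁ A₁' * C₁ * B₁' * B₂) -
          (A₂ * T * B₃ + A₁ * U * B₂) := by
      rw [hA₄_eq, hB₄_eq, ← sub_eq_zero, ← sub_eq_zero (b := _ - _ - _ - _)]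
      simp only [Matrix.mul_add, Matrix.add_mul, Matrix.mul_assoc]
      abel_nf
    simp only [substitute]
    rw [hA₄.exists_mul_add_mul_eq_sub_iff hB₄]
    simp only [Matrix.mul_add, Matrix.add_mul, Matrix.mul_assoc]
  constructor
  · rintro ⟨X, Y, Z, W, h₁, h₂, h₃⟩
    rw [sub_eq_add_neg, ← Matrix.neg_mul] at h₁ h₂ h₃
    have hC₁ := (hA₁.exists_mul_add_mul_eq_iff hB₁).1 ⟨X, -Y, h₁⟩
    have hC₃ := (hA₃.exists_mul_add_mul_eq_iff hB₃).1 ⟨Z, -W, h₃⟩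
    obtain ⟨U, V, hY⟩ := (hA₁.exists_left_mul_add_mul_eq_iff hB₁ hC₁).1 ⟨X, h₁⟩
    obtain ⟨S, T, hZ⟩ := (hA₃.exists_right_mul_add_mul_eq_iff hC₃).1 ⟨-W, h₃⟩
    rw [hY, hZ] at h₂
    exact ⟨hC₁, hC₃, T, U, (eliminate_SV T U).1 ⟨S, V, h₂⟩⟩
  · rintro ⟨hC₁, hC₃, T, U, hTU⟩
    obtain ⟨S, V, h₂⟩ := (eliminate_SV T U).2 hTU
    obtain ⟨X, h₁⟩ := (hA₁.exists_left_mul_add_mul_eq_iff hB₁ hC₁).2 ⟨U, V, rfl⟩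
    obtain ⟨W, h₃⟩ := (hA₃.exists_right_mul_add_mul_eq_iff hC₃).2 ⟨S, T, rfl⟩
    rw [← sub_neg_eq_add, ← Matrix.neg_mul] at h₁ h₂ h₃
    exact ⟨X, _, _, _, h₁, h₂, h₃⟩

theorem stmt_14_general
    {A₁ : Matrix m p₁ R} {A₁' : Matrix p₁ m R} (hA₁ : IsInnerInv A₁ A₁')
    {B₁ : Matrix q n₁ R} {B₁' : Matrix n₁ q R} (hB₁ : IsInnerInv B₁ B₁') {C₁ : Matrix m n₁ R}
    {A₂ : Matrix m p₂ R} {A₂' : Matrix p₂ m R} (hA₂ : IsInnerInv A₂ A₂')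
    {B₂ : Matrix q n₂ R} {B₂' : Matrix n₂ q R} (hB₂ : IsInnerInv B₂ B₂') {C₂ : Matrix m n₂ R}
    {A₃ : Matrix m₃ p₂ R} {A₃' : Matrix p₂ m₃ R} (hA₃ : IsInnerInv A₃ A₃')
    {B₃ : Matrix q₄ n₂ R} {B₃' : Matrix n₂ q₄ R} (hB₃ : IsInnerInv B₃ B₃') {C₃ : Matrix m₃ n₂ R}
    {A₄ : Matrix m p₂ R} (hA₄_eq : A₄ = A₂ * kerProj A₃ A₃')
    {A₄' : Matrix p₂ m R} (hA₄ : IsInnerInv A₄ A₄')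
    {B₄ : Matrix q n₂ R} (hB₄_eq : B₄ = cokerProj B₁ B₁' * B₂)
    {B₄' : Matrix n₂ q R} (hB₄ : IsInnerInv B₄ B₄')
    {A : Matrix m p₂ R} (hA_eq : A = cokerProj A₄ A₄' * A₂)
    {A' : Matrix p₂ m R} (hA : IsInnerInv A A')
    {B : Matrix q₄ n₂ R} (hB_eq : B = B₃ * kerProj B₄ B₄')
    {B' : Matrix n₂ q₄ R} (hB : IsInnerInv B B')
    {C : Matrix m p₁ R} (hC_eq : C = cokerProj A₄ A₄' * A₁)
    {C' : Matrix p₁ m R} (hC : IsInnerInv C C')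
    {D : Matrix q n₂ R} (hD_eq : D = B₂ * kerProj B₄ B₄')
    {D' : Matrix n₂ q R} (hD : IsInnerInv D D')
    {C₄ : Matrix m n₂ R}
    (hC₄_eq : C₄ = C₂ - A₂ * A₃' * C₃ - cokerProj A₁ A₁' * C₁ * B₁' * B₂)
    {E : Matrix m n₂ R} (hE_eq : E = cokerProj A₄ A₄' * C₄ * kerProj B₄ B₄')
    {M : Matrix m p₁ R} (hM_eq : M = cokerProj A A' * C)
    {M' : Matrix p₁ m R} (hM : IsInnerInv M M')
    {N : Matrix q n₂ R} (hN_eq : N = D * kerProj B B')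
    {N' : Matrix n₂ q R} (hN : IsInnerInv N N') :
    (∃ (X : Matrix p₁ n₁ R) (Y : Matrix m q R) (Z : Matrix p₂ n₂ R) (W : Matrix m₃ q₄ R),
        A₁ * X - Y * B₁ = C₁ ∧ A₂ * Z - Y * B₂ = C₂ ∧ A₃ * Z - W * B₃ = C₃) ↔
      cokerProj A₁ A₁' * C₁ * kerProj B₁ B₁' = 0 ∧ cokerProj A₂ A₂' * C₂ * kerProj B₂ B₂' = 0 ∧
      cokerProj A₃ A₃' * C₃ * kerProj B₃ B₃' = 0 ∧
      cokerProj M M' * cokerProj A A' * E = 0 ∧ E * kerProj B B' * kerProj N N' = 0 ∧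
      cokerProj A A' * E * kerProj D D' = 0 ∧ cokerProj C C' * E * kerProj B B' = 0 := by
  subst hM_eq hN_eq
  have reduction := exists_coupled_iff_exists_mul_mul_add_mul_mul_eq (C₁ := C₁) (C₂ := C₂)
    (C₃ := C₃) hA₁ hB₁ hA₃ hB₃ hA₄_eq hA₄ hB₄_eq hB₄
  rw [← hC₄_eq, ← hE_eq, ← hA_eq, ← hB_eq, ← hC_eq, ← hD_eq,
    exists_mul_mul_add_mul_mul_eq_iff hA hB hC hD hM hN] at reduction
  constructor
  · intro solvable
    obtain ⟨h₁, h₃, hE⟩ := reduction.1 solvable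
    obtain ⟨_, Y, Z, _, -, hYZ, -⟩ := solvable
    rw [sub_eq_add_neg, ← Matrix.neg_mul] at hYZ
    exact ⟨h₁, (hA₂.exists_mul_add_mul_eq_iff hB₂).1 ⟨Z, -Y, hYZ⟩, h₃, hE⟩
  · exact fun ⟨h₁, _, h₃, hE⟩ ↦ reduction.2 ⟨h₁, h₃, hE⟩

end CoupledSystem

theorem stmt_14 {m q p1 n1 p2 n2 m3 q4 : ℕ}
    (A1 : Mat m p1) (A1d : Mat p1 m) (hA1 : IsMPInv A1 A1d)
    (B1 : Mat q n1) (B1d : Mat n1 q) (hB1 : IsMPInv B1 B1d)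
    (C1 : Mat m n1)
    (A2 : Mat m p2) (A2d : Mat p2 m) (hA2 : IsMPInv A2 A2d)
    (B2 : Mat q n2) (B2d : Mat n2 q) (hB2 : IsMPInv B2 B2d)
    (C2 : Mat m n2)
    (A3 : Mat m3 p2) (A3d : Mat p2 m3) (hA3 : IsMPInv A3 A3d)
    (B3 : Mat q4 n2) (B3d : Mat n2 q4) (hB3 : IsMPInv B3 B3d)
    (C3 : Mat m3 n2)
    (A4 : Mat m p2) (hA4 : A4 = A2 * Lp A3 A3d)
    (A4d : Mat p2 m) (hA4d : IsMPInv A4 A4d)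
    (B4 : Mat q n2) (hB4 : B4 = Rp B1 B1d * B2)
    (B4d : Mat n2 q) (hB4d : IsMPInv B4 B4d)
    (A : Mat m p2) (hA : A = Rp A4 A4d * A2)
    (Ad : Mat p2 m) (hAd : IsMPInv A Ad)
    (B : Mat q4 n2) (hB : B = B3 * Lp B4 B4d)
    (Bd : Mat n2 q4) (hBd : IsMPInv B Bd)
    (C : Mat m p1) (hC : C = Rp A4 A4d * A1)
    (Cd : Mat p1 m) (hCd : IsMPInv C Cd)
    (D : Mat q n2) (hD : D = B2 * Lp B4 B4d)
    (Dd : Mat n2 q) (hDd : IsMPInv D Dd)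
    (C4 : Mat m n2)
    (hC4 : C4 = C2 - A2 * A3d * C3 - Rp A1 A1d * C1 * B1d * B2)
    (E : Mat m n2) (hE : E = Rp A4 A4d * C4 * Lp B4 B4d)
    (MM : Mat m p1) (hMM : MM = Rp A Ad * C)
    (MMd : Mat p1 m) (hMMd : IsMPInv MM MMd)
    (NN : Mat q n2) (hNN : NN = D * Lp B Bd)
    (NNd : Mat n2 q) (hNNd : IsMPInv NN NNd) :
    (∃ (X : Mat p1 n1) (Y : Mat m q) (Z : Mat p2 n2) (W : Mat m3 q4),
        A1 * X - Y * B1 = C1 ∧ A2 * Z - Y * B2 = C2 ∧ A3 * Z - W * B3 = C3) ↔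
      (Rp A1 A1d * C1 * Lp B1 B1d = 0 ∧ Rp A2 A2d * C2 * Lp B2 B2d = 0 ∧
        Rp A3 A3d * C3 * Lp B3 B3d = 0 ∧
        Rp MM MMd * Rp A Ad * E = 0 ∧ E * Lp B Bd * Lp NN NNd = 0 ∧
        Rp A Ad * E * Lp D Dd = 0 ∧ Rp C Cd * E * Lp B Bd = 0) :=
  stmt_14_general hA1.1 hB1.1 hA2.1 hB2.1 hA3.1 hB3.1 hA4 hA4d.1 hB4 hB4d.1 hA hAd.1 hB hBd.1
    hC hCd.1 hD hDd.1 hC4 hE hMM hMMd.1 hNN hNNd.1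
end
end
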